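/- arXiv:1802.03736 — 2 statements merged into one kernel-verified Lean document; each statement's English description precedes it below -/
import Mathlib

section
/- With the coordinate setup below, suppose F_{kij} = 0 identically on U and U is connected. Then F̄_{kij} = 0 identically on U if and only if α is a constant function. -/
open scoped BigOperators

/-- Points of ℝ³. -/
abbrev Pt := Fin 3 → ℝ

/-- Partial derivative `∂_i f` at `p`. -/
noncomputable def pd (i : Fin 3) (f : Pt → ℝ) (p : Pt) : ℝ :=
  fderiv ℝ f p (Pi.single i 1)

/-- The circulant structure `Q` with `Q¹₂ = Q²₃ = Q³₁ = 1`. -/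
def Qmat : Matrix (Fin 3) (Fin 3) ℝ := !![0,1,0; 0,0,1; 1,0,0]

/-- The metric `g_{ij}`: diagonal entries `A`, off-diagonal entries `B`. -/
def gm (A B : Pt → ℝ) (i j : Fin 3) (p : Pt) : ℝ :=
  if i = j then A p else B p

/-- The associated metric `g̃_{ij} = g_{is} Q^s_j + g_{sj} Q^s_i`. -/
def gt (A B : Pt → ℝ) (i j : Fin 3) (p : Pt) : ℝ :=
  ∑ s, (gm A B i s p * Qmat s j + gm A B s j p * Qmat s i)

/-- Christoffel symbols `Γ^k_{ij}` of a metric `h` with (pointwise) inverse `hinv`. -/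
noncomputable def Gamma (h hinv : Fin 3 → Fin 3 → Pt → ℝ) (k i j : Fin 3) (p : Pt) : ℝ :=
  (1/2) * ∑ s, hinv k s p * (pd i (h s j) p + pd j (h s i) p - pd s (h i j) p)

/-- Fundamental tensor `F_{kij} = ∂_k g̃_{ij} − Γ^s_{ki} g̃_{sj} − Γ^s_{kj} g̃_{si}`
of the metric `h` (with inverse `hinv`) acting on `ht` (= the associated metric). -/
noncomputable def Ften (h hinv ht : Fin 3 → Fin 3 → Pt → ℝ) (k i j : Fin 3) (p : Pt) : ℝ :=
  pd k (ht i j) p - (∑ s, Gamma h hinv s k i p * ht s j p)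
    - (∑ s, Gamma h hinv s k j p * ht s i p)

/-- Lee form `θ_k = g^{ij} F_{ijk}`. -/
noncomputable def theta (h hinv ht : Fin 3 → Fin 3 → Pt → ℝ) (k : Fin 3) (p : Pt) : ℝ :=
  ∑ i, ∑ j, hinv i j p * Ften h hinv ht i j k p

/-- Lee form `θ*_k = g^{ij} Q^s_j F_{isk}`. -/
noncomputable def thetaStar (h hinv ht : Fin 3 → Fin 3 → Pt → ℝ) (k : Fin 3) (p : Pt) : ℝ :=
  ∑ i, ∑ j, ∑ s, hinv i j p * Qmat s j * Ften h hinv ht i s k p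

/-!
Rescaling a metric `g` to `α g` changes its Christoffel symbols by terms linear in `∂α`, so
`F̄ - α F` is linear in `∂α` too. For the circulant metric, `g̃_{ij} = A + 2B - g_{ij}`, and since
every row of `g` sums to `A + 2B`, contracting `g̃` with the raised gradient of `α` gives
`S - ∂_j α`, where `S = ∑ₜ ∂_t α`; no explicit inverse of `g` is needed. Hence
`F̄_{kij} - α F_{kij} = -½ ((A + 2B)(∂_i α + ∂_j α) - S (g_{ki} + g_{kj}))`.
If this vanishes, then `i = j` gives `(A + 2B) ∂_i α = S g_{ki}` for every `k`, and comparing two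
values of `k` gives `(A - B) S = 0`. Nondegeneracy of `g` means `A ≠ B` and `A + 2B ≠ 0`, so
`S = 0` and then `∂α = 0`.
-/

/-- The conformal change `α h` of a field `h` of bilinear forms by a factor `α`. -/
def conformalChange (α : Pt → ℝ) (h : Fin 3 → Fin 3 → Pt → ℝ) (i j : Fin 3) (p : Pt) : ℝ :=
  α p * h i j p

/-- The matrix `hinv` is a right inverse of `h` at the point `p`; this is the coordinate form in
which the inverse metric `g^{ij}` is given. -/
def IsInverseAt (h hinv : Fin 3 → Fin 3 → Pt → ℝ) (p : Pt) : Prop :=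
  ∀ i j, ∑ s, h i s p * hinv s j p = if i = j then 1 else 0

/-- The gradient `∇^k f = h^{kt} ∂_t f` of `f` for a metric with inverse `hinv`. -/
noncomputable def raisedGradient (hinv : Fin 3 → Fin 3 → Pt → ℝ) (f : Pt → ℝ) (k : Fin 3)
    (p : Pt) : ℝ :=
  ∑ t, hinv k t p * pd t f p

section PartialDerivatives

variable {f g : Pt → ℝ} {p : Pt}

lemma pd_fun_mul (i : Fin 3) (hf : DifferentiableAt ℝ f p) (hg : DifferentiableAt ℝ g p) :
    pd i (fun q ↦ f q * g q) p = f p * pd i g p + g p * pd i f p := by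
  simp [pd, fderiv_fun_mul hf hg]

lemma fderiv_eq_zero_iff_pd_eq_zero : fderiv ℝ f p = 0 ↔ ∀ i, pd i f p = 0 := by
  refine ⟨fun h i ↦ by simp [pd, h], fun h ↦ ?_⟩
  refine ContinuousLinearMap.coe_injective ((Pi.basisFun ℝ (Fin 3)).ext fun i ↦ ?_)
  simpa [pd] using h i

lemma exists_const_iff_pd_eq_zero {U : Set Pt} (hU : IsOpen U) (hUconn : IsPreconnected U)
    (hf : DifferentiableOn ℝ f U) :
    (∃ c, ∀ p ∈ U, f p = c) ↔ ∀ p ∈ U, ∀ i, pd i f p = 0 := by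
  simp only [← fderiv_eq_zero_iff_pd_eq_zero]
  refine ⟨?_, hU.exists_is_const_of_fderiv_eq_zero hUconn hf⟩
  rintro ⟨c, hc⟩ p hp
  have hfc : f =ᶠ[nhds p] fun _ ↦ c := Filter.eventually_of_mem (hU.mem_nhds hp) hc
  simp [hfc.fderiv_eq]

end PartialDerivatives

section ConformalChange

variable {h hinv hinvbar ht : Fin 3 → Fin 3 → Pt → ℝ} {α : Pt → ℝ} {p : Pt}

lemma isInverseAt_iff_mul_eq_one :
    IsInverseAt h hinv p ↔
      (Matrix.of fun i j ↦ h i j p) * (Matrix.of fun i j ↦ hinv i j p) = 1 := by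
  simp only [IsInverseAt, ← Matrix.ext_iff, Matrix.mul_apply, Matrix.of_apply, Matrix.one_apply]

lemma IsInverseAt.symm (isInv : IsInverseAt h hinv p) : IsInverseAt hinv h p := by
  rw [isInverseAt_iff_mul_eq_one] at isInv ⊢
  exact mul_eq_one_comm.mp isInv

lemma IsInverseAt.unique (h₁ : IsInverseAt h hinv p) (h₂ : IsInverseAt h hinvbar p) (i j : Fin 3) :
    hinv i j p = hinvbar i j p := by
  have matrices_eq := left_inv_eq_right_inv (isInverseAt_iff_mul_eq_one.mp h₁.symm)
    (isInverseAt_iff_mul_eq_one.mp h₂)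
  exact congrFun₂ matrices_eq i j

lemma isInverseAt_conformalChange_comm :
    IsInverseAt (conformalChange α h) hinv p ↔ IsInverseAt h (conformalChange α hinv) p := by
  simp only [IsInverseAt, conformalChange, mul_left_comm, mul_assoc]

lemma IsInverseAt.sum_mul_raisedGradient (isInv : IsInverseAt h hinv p) (i : Fin 3) :
    ∑ s, h i s p * raisedGradient hinv α s p = pd i α p := by
  simp only [raisedGradient, Finset.mul_sum, ← mul_assoc]
  rw [Finset.sum_comm]
  simp [← Finset.sum_mul, isInv i _]

lemma mul_Gamma_conformalChange (hα : DifferentiableAt ℝ α p)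
    (hh : ∀ i j, DifferentiableAt ℝ (h i j) p) (isInv : IsInverseAt h hinv p)
    (isInvBar : IsInverseAt (conformalChange α h) hinvbar p) (k i j : Fin 3) :
    α p * Gamma (conformalChange α h) hinvbar k i j p =
      α p * Gamma h hinv k i j p + (1 / 2) * ((if k = j then 1 else 0) * pd i α p
        + (if k = i then 1 else 0) * pd j α p - h i j p * raisedGradient hinv α k p) := by
  have pd_change (l a b : Fin 3) : pd l (conformalChange α h a b) p =
      α p * pd l (h a b) p + h a b p * pd l α p := pd_fun_mul l hα (hh a b)
  have hinv_eq (a b : Fin 3) : hinv a b p = α p * hinvbar a b p :=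
    isInv.unique (isInverseAt_conformalChange_comm.mp isInvBar) a b
  rw [← isInv.symm k j, ← isInv.symm k i]
  simp only [Gamma, raisedGradient, pd_change, hinv_eq, Fin.sum_univ_three]
  ring

lemma Ften_conformalChange (hα : DifferentiableAt ℝ α p)
    (hh : ∀ i j, DifferentiableAt ℝ (h i j) p) (hht : ∀ i j, DifferentiableAt ℝ (ht i j) p)
    (ht_symm : ∀ i j, ht i j p = ht j i p) (isInv : IsInverseAt h hinv p)
    (isInvBar : IsInverseAt (conformalChange α h) hinvbar p) (k i j : Fin 3) :
    Ften (conformalChange α h) hinvbar (conformalChange α ht) k i j p =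
      α p * Ften h hinv ht k i j p
        - (1 / 2) * (ht k j p * pd i α p + ht k i p * pd j α p
          - h k i p * ∑ s, raisedGradient hinv α s p * ht s j p
          - h k j p * ∑ s, raisedGradient hinv α s p * ht s i p) := by
  have pd_change : pd k (conformalChange α ht i j) p =
      α p * pd k (ht i j) p + ht i j p * pd k α p := pd_fun_mul k hα (hht i j)
  have contraction (i j : Fin 3) :
      ∑ s, Gamma (conformalChange α h) hinvbar s k i p * conformalChange α ht s j p =
        α p * ∑ s, Gamma h hinv s k i p * ht s j p
          + (1 / 2) * (ht i j p * pd k α p + ht k j p * pd i α p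
            - h k i p * ∑ s, raisedGradient hinv α s p * ht s j p) := by
    have δ_sum (l : Fin 3) : ht l j p = ∑ s, (if s = l then 1 else 0) * ht s j p := by simp
    have Γ_mul (s : Fin 3) :
        Gamma (conformalChange α h) hinvbar s k i p * conformalChange α ht s j p =
          (α p * Gamma (conformalChange α h) hinvbar s k i p) * ht s j p := by
      rw [conformalChange]; ring
    simp only [Γ_mul, mul_Gamma_conformalChange hα hh isInv isInvBar]
    rw [δ_sum i, δ_sum k]
    simp only [Fin.sum_univ_three]
    ring
  rw [Ften, Ften, pd_change, contraction i j, contraction j i, ht_symm j i]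
  ring

end ConformalChange

section CirculantMetric

variable {A B α : Pt → ℝ} {ginv ginvbar : Fin 3 → Fin 3 → Pt → ℝ} {p : Pt}

lemma gm_symm (A B : Pt → ℝ) (i j : Fin 3) (p : Pt) : gm A B i j p = gm A B j i p := by
  simp only [gm, eq_comm]

lemma sum_gm (A B : Pt → ℝ) (j : Fin 3) (p : Pt) : ∑ i, gm A B i j p = A p + 2 * B p := by
  fin_cases j <;> simp [gm, Fin.sum_univ_three] <;> ring

lemma gt_eq_sub_gm (A B : Pt → ℝ) (i j : Fin 3) (p : Pt) :
    gt A B i j p = A p + 2 * B p - gm A B i j p := by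
  fin_cases i <;> fin_cases j <;> simp [gt, gm, Qmat, Fin.sum_univ_three] <;> ring

lemma differentiableAt_gm (hA : DifferentiableAt ℝ A p) (hB : DifferentiableAt ℝ B p)
    (i j : Fin 3) : DifferentiableAt ℝ (gm A B i j) p := by
  unfold gm
  split_ifs <;> assumption

lemma differentiableAt_gt (hA : DifferentiableAt ℝ A p) (hB : DifferentiableAt ℝ B p)
    (i j : Fin 3) : DifferentiableAt ℝ (gt A B i j) p := by
  have hg := differentiableAt_gm hA hB
  unfold gt
  fun_prop

lemma IsInverseAt.gm_diag_ne_offDiag (isInv : IsInverseAt (gm A B) ginv p) : A p ≠ B p := by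
  intro hAB
  have rows_eq (s : Fin 3) : gm A B 0 s p = gm A B 1 s p := by simp [gm, hAB]
  have h₀ := isInv 0 0
  have h₁ := isInv 1 0
  simp only [rows_eq, h₁] at h₀
  norm_num at h₀

lemma IsInverseAt.gm_sum_ne_zero (isInv : IsInverseAt (gm A B) ginv p) :
    A p + 2 * B p ≠ 0 := by
  intro hAB
  have column_sum : ∑ i, ∑ s, gm A B i s p * ginv s 0 p = 1 := by simp [isInv _ 0]
  rw [Finset.sum_comm] at column_sum
  simp [← Finset.sum_mul, sum_gm, hAB] at column_sum

lemma sum_raisedGradient_mul_gt (isInv : IsInverseAt (gm A B) ginv p) (j : Fin 3) :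
    ∑ s, raisedGradient ginv α s p * gt A B s j p = ∑ t, pd t α p - pd j α p := by
  have lower (i : Fin 3) : ∑ s, raisedGradient ginv α s p * gm A B s i p = pd i α p := by
    rw [← isInv.sum_mul_raisedGradient i]
    exact Finset.sum_congr rfl fun s _ ↦ by rw [gm_symm, mul_comm]
  have trace : ∑ t, pd t α p = ∑ s, raisedGradient ginv α s p * (A p + 2 * B p) := by
    calc
      ∑ t, pd t α p = ∑ t, ∑ s, gm A B t s p * raisedGradient ginv α s p := by
          simp only [isInv.sum_mul_raisedGradient]
      _ = ∑ s, (∑ t, gm A B t s p) * raisedGradient ginv α s p := by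
          rw [Finset.sum_comm]
          simp only [Finset.sum_mul]
      _ = ∑ s, raisedGradient ginv α s p * (A p + 2 * B p) := by
          simp only [sum_gm, mul_comm]
  simp only [gt_eq_sub_gm, mul_sub, Finset.sum_sub_distrib, lower, trace]

lemma Ften_conformalChange_gm (hA : DifferentiableAt ℝ A p) (hB : DifferentiableAt ℝ B p)
    (hα : DifferentiableAt ℝ α p) (isInv : IsInverseAt (gm A B) ginv p)
    (isInvBar : IsInverseAt (conformalChange α (gm A B)) ginvbar p) (k i j : Fin 3) :
    Ften (conformalChange α (gm A B)) ginvbar (conformalChange α (gt A B)) k i j p =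
      α p * Ften (gm A B) ginv (gt A B) k i j p
        - (1 / 2) * ((A p + 2 * B p) * (pd i α p + pd j α p)
          - (∑ t, pd t α p) * (gm A B k i p + gm A B k j p)) := by
  have gt_symm (a b : Fin 3) : gt A B a b p = gt A B b a p := by
    rw [gt_eq_sub_gm, gt_eq_sub_gm, gm_symm]
  rw [Ften_conformalChange hα (differentiableAt_gm hA hB) (differentiableAt_gt hA hB) gt_symm
    isInv isInvBar, sum_raisedGradient_mul_gt isInv, sum_raisedGradient_mul_gt isInv,
    gt_eq_sub_gm, gt_eq_sub_gm]
  ring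

lemma Ften_conformalChange_gm_eq_iff (hA : DifferentiableAt ℝ A p) (hB : DifferentiableAt ℝ B p)
    (hα : DifferentiableAt ℝ α p) (isInv : IsInverseAt (gm A B) ginv p)
    (isInvBar : IsInverseAt (conformalChange α (gm A B)) ginvbar p) :
    (∀ k i j, Ften (conformalChange α (gm A B)) ginvbar (conformalChange α (gt A B)) k i j p =
      α p * Ften (gm A B) ginv (gt A B) k i j p) ↔ ∀ i, pd i α p = 0 := by
  simp only [Ften_conformalChange_gm hA hB hα isInv isInvBar]
  refine ⟨fun hF ↦ ?_, fun hpd k i j ↦ by simp [hpd]⟩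
  have diagonal (k i : Fin 3) :
      (A p + 2 * B p) * pd i α p = (∑ t, pd t α p) * gm A B k i p := by
    linear_combination -(hF k i i)
  have sum_eq_zero : ∑ t, pd t α p = 0 := by
    by_contra hS
    have rows_eq : gm A B 0 0 p = gm A B 1 0 p :=
      mul_left_cancel₀ hS ((diagonal 0 0).symm.trans (diagonal 1 0))
    exact isInv.gm_diag_ne_offDiag (by simpa [gm] using rows_eq)
  intro i
  have mul_pd_eq_zero : (A p + 2 * B p) * pd i α p = 0 := by
    rw [diagonal i i, sum_eq_zero, zero_mul]
  exact (mul_eq_zero.mp mul_pd_eq_zero).resolve_left isInv.gm_sum_ne_zero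

end CirculantMetric

theorem conformal_F_vanishes_iff_constant_general
    {U : Set Pt} (hU : IsOpen U) (hUconn : IsPreconnected U) {A B α : Pt → ℝ}
    (hA : DifferentiableOn ℝ A U) (hB : DifferentiableOn ℝ B U) (hα : DifferentiableOn ℝ α U)
    {ginv ginvbar : Fin 3 → Fin 3 → Pt → ℝ}
    (hginv : ∀ p ∈ U, IsInverseAt (gm A B) ginv p)
    (hginvbar : ∀ p ∈ U, IsInverseAt (conformalChange α (gm A B)) ginvbar p) :
    (∀ p ∈ U, ∀ k i j,
      Ften (conformalChange α (gm A B)) ginvbar (conformalChange α (gt A B)) k i j p =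
        α p * Ften (gm A B) ginv (gt A B) k i j p) ↔
      ∃ c : ℝ, ∀ p ∈ U, α p = c := by
  rw [exists_const_iff_pd_eq_zero hU hUconn hα]
  exact forall₂_congr fun p hp ↦
    have hp_nhds := hU.mem_nhds hp
    Ften_conformalChange_gm_eq_iff (hA.differentiableAt hp_nhds) (hB.differentiableAt hp_nhds)
      (hα.differentiableAt hp_nhds) (hginv p hp) (hginvbar p hp)

/-- if `F = 0` on the connected open set `U`, then the conformally
transformed fundamental tensor `F̄` vanishes on `U` iff `α` is constant on `U`. -/
theorem conformal_F_vanishes_iff_constant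
    (U : Set Pt) (hU : IsOpen U) (hUconn : IsConnected U) (A B : Pt → ℝ)
    (hA : ContDiffOn ℝ (⊤ : ℕ∞) A U) (hB : ContDiffOn ℝ (⊤ : ℕ∞) B U)
    (hpos : ∀ p ∈ U, 0 < B p ∧ B p < A p)
    (ginv : Fin 3 → Fin 3 → Pt → ℝ)
    (hginv : ∀ p ∈ U, ∀ i j, (∑ s, gm A B i s p * ginv s j p) = if i = j then (1:ℝ) else 0)
    (hF : ∀ p ∈ U, ∀ k i j, Ften (gm A B) ginv (gt A B) k i j p = 0)
    (α : Pt → ℝ) (hα : ContDiffOn ℝ (⊤ : ℕ∞) α U) (hαpos : ∀ p ∈ U, 0 < α p)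
    (gbar gtbar ginvbar : Fin 3 → Fin 3 → Pt → ℝ)
    (hgbar : ∀ i j p, gbar i j p = α p * gm A B i j p)
    (hgtbar : ∀ i j p, gtbar i j p = α p * gt A B i j p)
    (hginvbar : ∀ p ∈ U, ∀ i j, (∑ s, gbar i s p * ginvbar s j p) = if i = j then (1:ℝ) else 0) :
    (∀ p ∈ U, ∀ k i j, Ften gbar ginvbar gtbar k i j p = 0) ↔
      (∃ c : ℝ, ∀ p ∈ U, α p = c) := by
  obtain rfl : gbar = conformalChange α (gm A B) := funext₃ hgbar
  obtain rfl : gtbar = conformalChange α (gt A B) := funext₃ hgtbar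
  have top_ne_zero : ((⊤ : ℕ∞) : WithTop ℕ∞) ≠ 0 := by simp
  rw [← conformal_F_vanishes_iff_constant_general hU hUconn.isPreconnected
    (hA.differentiableOn top_ne_zero) (hB.differentiableOn top_ne_zero)
    (hα.differentiableOn top_ne_zero) hginv hginvbar]
  exact forall₂_congr fun p hp ↦ by simp only [hF p hp, mul_zero]
end

section
/- With the coordinate setup below, if the curvature of g̃ vanishes identically on U (R̃^l_{ijk} = 0 for all indices), then the Ricci tensor of g satisfies ρ_{ij} = (τ/3)·g_{ij} + ((2τ* + τ)/6)·g̃_{ij} at every point of U; in particular (U, g, Q) is almost Einstein, i.e. ρ is a functional linear combination of g and g̃. -/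
open scoped BigOperators

/-- Curvature `R^l_{ijk} = ∂_i Γ^l_{jk} − ∂_j Γ^l_{ik} + Γ^s_{jk}Γ^l_{is} − Γ^s_{ik}Γ^l_{js}`
of the metric `h` with inverse `hinv`. -/
noncomputable def Riem (h hinv : Fin 3 → Fin 3 → Pt → ℝ) (l i j k : Fin 3) (p : Pt) : ℝ :=
  pd i (Gamma h hinv l j k) p - pd j (Gamma h hinv l i k) p
    + (∑ s, Gamma h hinv s j k p * Gamma h hinv l i s p)
    - (∑ s, Gamma h hinv s i k p * Gamma h hinv l j s p)

/-- Lowered curvature `R_{ijkl} = h_{ls} R^s_{ijk}`. -/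
noncomputable def RiemLow (h hinv : Fin 3 → Fin 3 → Pt → ℝ) (i j k l : Fin 3) (p : Pt) : ℝ :=
  ∑ s, h l s p * Riem h hinv s i j k p

/-- Ricci tensor `ρ_{jk} = h^{il} R_{ijkl}`. -/
noncomputable def Ricci (h hinv : Fin 3 → Fin 3 → Pt → ℝ) (j k : Fin 3) (p : Pt) : ℝ :=
  ∑ i, ∑ l, hinv i l p * RiemLow h hinv i j k l p

/-- Scalar curvature obtained by contracting the Ricci tensor of `(h, hinv)` with the
(inverse) metric `contr`: `contr^{jk} ρ_{jk}`. -/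
noncomputable def scal (h hinv contr : Fin 3 → Fin 3 → Pt → ℝ) (p : Pt) : ℝ :=
  ∑ j, ∑ k, contr j k p * Ricci h hinv j k p

/-!
Put `a = A - B`, `c = A + 2B`, `ω = dx¹ + dx² + dx³`, and let `P` be the Euclidean orthogonal
projection onto the kernel of `ω`. Then `g = a P + (c/3) ω ⊗ ω` and `g̃ = -a P + (2c/3) ω ⊗ ω`.
The Christoffel symbols of the two metrics differ by a tensor `T^k_{ij} = α P_{ij} + β^k ω_i ω_j`
with `ω(β) = 0`. It is trace-free, so `Ric(g̃) - Ric(g)` is `∇_i T^i_{jk} - T^s_{ik} T^i_{js}`.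
Lower the index of `β` with the Euclidean metric. Modulo `P` and `ω ⊗ ω`, each of these two terms
is a multiple of `α (β_j ω_k + ω_j β_k)`, and the two multiples cancel. As `P` and `ω ⊗ ω` have the
same span as `g` and `g̃`, flatness of `g̃` puts `Ric(g)` into that span, and tracing with `g` and
`g̃` gives the coefficients.
-/

open Filter Topology

section PartialDerivatives

variable {f g : Pt → ℝ} {p : Pt}

theorem pd_congr (h : f =ᶠ[𝓝 p] g) (i : Fin 3) : pd i f p = pd i g p := by
  rw [pd, pd, h.fderiv_eq]

theorem pd_add (hf : DifferentiableAt ℝ f p) (hg : DifferentiableAt ℝ g p) (i : Fin 3) :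
    pd i (fun q => f q + g q) p = pd i f p + pd i g p := by
  simp [pd, fderiv_fun_add hf hg]

theorem pd_mul_const (hf : DifferentiableAt ℝ f p) (r : ℝ) (i : Fin 3) :
    pd i (fun q => f q * r) p = pd i f p * r := by
  rw [pd, pd, fderiv_mul_const hf]
  simp [mul_comm]

theorem pd_sum {ι : Type*} {s : Finset ι} {F : ι → Pt → ℝ}
    (hF : ∀ m ∈ s, DifferentiableAt ℝ (F m) p) (i : Fin 3) :
    pd i (fun q => ∑ m ∈ s, F m q) p = ∑ m ∈ s, pd i (F m) p := by
  simp [pd, fderiv_fun_sum hF]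

theorem differentiableAt_pd (hf : ContDiffAt ℝ 2 f p) (i : Fin 3) :
    DifferentiableAt ℝ (pd i f) p :=
  ((hf.fderiv_right (m := 1) (by norm_num)).clm_apply contDiffAt_const).differentiableAt
    one_ne_zero

end PartialDerivatives

section SymmetricCirculant

/-- The matrix of the orthogonal projection of `ℝ³` onto the complement of `(1, 1, 1)`. -/
noncomputable def perp (i j : Fin 3) : ℝ := (if i = j then 1 else 0) - 1 / 3

/-- The component of `v` orthogonal to `(1, 1, 1)`. -/
noncomputable def perpPart (v : Fin 3 → ℝ) (k : Fin 3) : ℝ := v k - (∑ s, v s) / 3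

/-- The symmetric circulant matrix with eigenvalue `y` on `(1, 1, 1)` and eigenvalue `x` on its
orthogonal complement. -/
noncomputable def symmCirc (x y : ℝ) : Matrix (Fin 3) (Fin 3) ℝ :=
  fun i j => x * perp i j + y / 3

theorem perp_comm (i j : Fin 3) : perp i j = perp j i := by
  simp only [perp, eq_comm]

theorem sum_perp_mul (v : Fin 3 → ℝ) (j : Fin 3) : ∑ i, perp i j * v i = perpPart v j := by
  simp [perp, perpPart, sub_mul, Finset.sum_sub_distrib, ← Finset.mul_sum]
  ring

theorem sum_perp (j : Fin 3) : ∑ i, perp i j = 0 := by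
  simp [perp, Finset.sum_sub_distrib]

theorem sum_perpPart (v : Fin 3 → ℝ) : ∑ k, perpPart v k = 0 := by
  simp [perpPart, Finset.sum_sub_distrib]
  ring

theorem perpPart_eq_self {v : Fin 3 → ℝ} (hv : ∑ s, v s = 0) : perpPart v = v := by
  ext k
  simp [perpPart, hv]

theorem sum_perp_add_mul_perp_add {b : Fin 3 → ℝ} (hb : ∑ s, b s = 0) (a : ℝ) (j k : Fin 3) :
    ∑ i, ∑ s, (a * perp i k + b s) * (a * perp s j + b i) = 3 * a * (b j + b k) := by
  have h_inner : ∀ i, ∑ s, (a * perp i k + b s) * (a * perp s j + b i)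
      = 3 * a * (perp i k * b i) + a * b j := fun i => by
    calc ∑ s, (a * perp i k + b s) * (a * perp s j + b i)
        = a * perp i k * (a * ∑ s, perp s j + 3 * b i) + a * ∑ s, perp s j * b s
          + (∑ s, b s) * b i := by
          simp only [Fin.sum_univ_three]
          ring
      _ = 3 * a * (perp i k * b i) + a * b j := by
          rw [sum_perp, sum_perp_mul, perpPart_eq_self hb, hb]
          ring
  simp only [h_inner, Finset.sum_add_distrib, ← Finset.mul_sum, sum_perp_mul, perpPart_eq_self hb,
    Finset.sum_const, Finset.card_univ, Fintype.card_fin, nsmul_eq_mul]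
  push_cast
  ring

theorem sum_symmCirc_mul_vec (x y : ℝ) (v : Fin 3 → ℝ) (i : Fin 3) :
    ∑ s, symmCirc x y i s * v s = x * perpPart v i + y * ((∑ s, v s) / 3) := by
  simp only [symmCirc, perp_comm i, add_mul, mul_assoc, Finset.sum_add_distrib, ← Finset.mul_sum,
    sum_perp_mul]
  ring

theorem sum_symmCirc (x y : ℝ) (j : Fin 3) : ∑ i, symmCirc x y i j = y := by
  simp [symmCirc, Finset.sum_add_distrib, ← Finset.mul_sum, sum_perp]
  ring

theorem symmCirc_mul (x y x' y' : ℝ) :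
    symmCirc x y * symmCirc x' y' = symmCirc (x * x') (y * y') := by
  ext i j
  rw [Matrix.mul_apply, sum_symmCirc_mul_vec, perpPart, sum_symmCirc]
  simp only [symmCirc]
  ring

theorem symmCirc_one_one : symmCirc 1 1 = 1 := by
  ext i j
  simp [symmCirc, perp, Matrix.one_apply]

theorem det_symmCirc (x y : ℝ) : (symmCirc x y).det = x ^ 2 * y := by
  simp [Matrix.det_fin_three, symmCirc, perp]
  ring

theorem sum_symmCirc_mul_symmCirc (x y x' y' : ℝ) :
    ∑ i, ∑ j, symmCirc x y i j * symmCirc x' y' i j = 2 * (x * x') + y * y' := by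
  simp [Fin.sum_univ_three, symmCirc, perp]
  ring

end SymmetricCirculant

section ConnectionRicci

/-- The Ricci tensor `∂_i G^i_{jk} - ∂_j G^i_{ik} + G^s_{jk} G^i_{is} - G^s_{ik} G^i_{js}` of the
affine connection with coefficients `G^k_{ij}`, written `G k i j`. -/
noncomputable def connRicci (G : Fin 3 → Fin 3 → Fin 3 → Pt → ℝ) (j k : Fin 3) (p : Pt) : ℝ :=
  ∑ i, (pd i (G i j k) p - pd j (G i i k) p
    + (∑ s, G s j k p * G i i s p) - (∑ s, G s i k p * G i j s p))

theorem Ricci_eq_connRicci {h hinv : Fin 3 → Fin 3 → Pt → ℝ} {p : Pt}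
    (hh : ∀ i j, ∑ s, h i s p * hinv s j p = if i = j then (1 : ℝ) else 0) (j k : Fin 3) :
    Ricci h hinv j k p = connRicci (Gamma h hinv) j k p := by
  have h_left : ∀ i j, ∑ s, hinv i s p * h s j p = if i = j then (1 : ℝ) else 0 := by
    have h_right : (Matrix.of fun i j => h i j p) * (Matrix.of fun i j => hinv i j p) = 1 := by
      ext i j
      simp [Matrix.mul_apply, hh, Matrix.one_apply]
    have h_mul := mul_eq_one_comm.mp h_right
    intro i j
    simpa [Matrix.mul_apply, Matrix.one_apply] using congrFun (congrFun h_mul i) j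
  refine Finset.sum_congr rfl fun i _ => ?_
  calc ∑ l, hinv i l p * RiemLow h hinv i j k l p
      = ∑ s, (∑ l, hinv i l p * h l s p) * Riem h hinv s i j k p := by
        simp only [RiemLow, Finset.mul_sum, Finset.sum_mul, mul_assoc]
        exact Finset.sum_comm
    _ = Riem h hinv i i j k p := by simp [h_left]

variable {G G' T : Fin 3 → Fin 3 → Fin 3 → Pt → ℝ} {p : Pt}

theorem connRicci_add_of_traceless
    (hG : ∀ k i j, DifferentiableAt ℝ (G k i j) p) (hT : ∀ k i j, DifferentiableAt ℝ (T k i j) p)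
    (hG' : ∀ᶠ q in 𝓝 p, ∀ k i j, G' k i j q = G k i j q + T k i j q)
    (htr : ∀ᶠ q in 𝓝 p, ∀ j, ∑ i, T i i j q = 0) (j k : Fin 3) :
    connRicci G' j k p = connRicci G j k p + ∑ i, pd i (T i j k) p
      + ∑ s, T s j k p * ∑ i, G i i s p
      - (∑ i, ∑ s, G s i k p * T i j s p + ∑ i, ∑ s, G i j s p * T s i k p)
      - ∑ i, ∑ s, T s i k p * T i j s p := by
  have hpd : ∀ m k i j, pd m (G' k i j) p = pd m (G k i j) p + pd m (T k i j) p :=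
    fun m k i j => (pd_congr (hG'.mono fun q hq => hq k i j) m).trans
      (pd_add (hG k i j) (hT k i j) m)
  have hpd_tr : ∑ i, pd j (T i i k) p = 0 := by
    rw [← pd_sum fun i _ => hT i i k, pd_congr (g := fun _ => 0) (htr.mono fun q hq => hq k)]
    simp [pd]
  have h_tr : ∑ i, ∑ s, G' s j k p * T i i s p = 0 := by
    rw [Finset.sum_comm]
    simp [← Finset.mul_sum, htr.self_of_nhds]
  simp only [connRicci, hpd, hG'.self_of_nhds, mul_add, add_mul, Finset.sum_add_distrib,
    Finset.sum_sub_distrib, hpd_tr] at h_tr ⊢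
  have h_swap : ∑ s, T s j k p * ∑ i, G i i s p = ∑ i, ∑ s, T s j k p * G i i s p := by
    rw [Finset.sum_comm]
    simp only [Finset.mul_sum]
  simp only [h_swap, mul_comm (G _ j _ p) (T _ _ k p)]
  linear_combination h_tr

theorem exists_connRicci_add_perp {α : Pt → ℝ} {β : Fin 3 → Pt → ℝ}
    (hG : ∀ k i j, DifferentiableAt ℝ (G k i j) p) (hα : DifferentiableAt ℝ α p)
    (hβ : ∀ k, DifferentiableAt ℝ (β k) p) (hβ_sum : ∀ᶠ q in 𝓝 p, ∑ k, β k q = 0)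
    (hG' : ∀ᶠ q in 𝓝 p, ∀ k i j, G' k i j q = G k i j q + (α q * perp i j + β k q)) :
    ∃ ξ η : ℝ, ∀ j k, connRicci G' j k p = connRicci G j k p + symmCirc ξ η j k
      - (∑ i, ∑ s, G i s k p * (α p * perp i j + β s p)
        + ∑ i, ∑ s, G i j s p * (α p * perp i k + β s p))
      - 3 * α p * (β j p + β k p) := by
  have hβp : ∑ k, β k p = 0 := hβ_sum.self_of_nhds
  have hT : ∀ k i j, DifferentiableAt ℝ (fun q => α q * perp i j + β k q) p :=
    fun k i j => (hα.mul_const _).add (hβ k)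
  have htr : ∀ᶠ q in 𝓝 p, ∀ j, ∑ i, (α q * perp i j + β i q) = 0 :=
    hβ_sum.mono fun q hq j => by
      rw [Finset.sum_add_distrib, ← Finset.mul_sum, sum_perp, hq, mul_zero, add_zero]
  refine ⟨∑ i, pd i α p + α p * ∑ s, ∑ i, G i i s p,
    3 * (∑ i, pd i (β i) p + ∑ s, β s p * ∑ i, G i i s p), fun j k => ?_⟩
  have h_div : ∑ i, pd i (fun q => α q * perp j k + β i q) p
      = (∑ i, pd i α p) * perp j k + ∑ i, pd i (β i) p := by
    simp only [pd_add (hα.mul_const _) (hβ _), pd_mul_const hα, Finset.sum_add_distrib,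
      Finset.sum_mul]
  have h_quad : ∑ i, ∑ s, (α p * perp i k + β s p) * (α p * perp j s + β i p)
      = 3 * α p * (β j p + β k p) := by
    simp only [perp_comm j, sum_perp_add_mul_perp_add hβp (α p) j k]
  have h_trace : ∑ s, (α p * perp j k + β s p) * ∑ i, G i i s p
      = α p * perp j k * ∑ s, ∑ i, G i i s p + ∑ s, β s p * ∑ i, G i i s p := by
    simp only [add_mul, Finset.sum_add_distrib, Finset.mul_sum]
  have h_swap : ∑ i, ∑ s, G s i k p * (α p * perp j s + β i p)
      = ∑ i, ∑ s, G i s k p * (α p * perp i j + β s p) := by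
    rw [Finset.sum_comm]
    simp only [perp_comm j]
  rw [connRicci_add_of_traceless hG hT hG' htr, h_div, h_quad, h_trace, h_swap, symmCirc]
  ring

end ConnectionRicci

section CirculantChristoffel

/-- The Christoffel symbol `Γ^k_{ij}` of the metric `symmCirc x y` at a point where the functions
`x` and `y` have the partial derivatives `u` and `v`. -/
noncomputable def circChristoffel (x y : ℝ) (u v : Fin 3 → ℝ) (k i j : Fin 3) : ℝ :=
  1 / 2 * (u i / x * perp k j + u j / x * perp k i + (v i + v j) / (3 * y)
    - perp i j * (perpPart u k / x + (∑ s, u s) / (3 * y))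
    - (perpPart v k / x + (∑ s, v s) / (3 * y)) / 3)

theorem circChristoffel_comm (x y : ℝ) (u v : Fin 3 → ℝ) (k i j : Fin 3) :
    circChristoffel x y u v k i j = circChristoffel x y u v k j i := by
  rw [circChristoffel, circChristoffel, perp_comm i j]
  ring

theorem sum_symmCirc_inv_mul_eq_circChristoffel {x y : ℝ} (hx : x ≠ 0) (hy : y ≠ 0)
    (u v : Fin 3 → ℝ) (k i j : Fin 3) :
    1 / 2 * ∑ s, symmCirc x⁻¹ y⁻¹ k s * (symmCirc (u i) (v i) s j + symmCirc (u j) (v j) s i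
      - symmCirc (u s) (v s) i j) = circChristoffel x y u v k i j := by
  have h_sum : ∑ s, symmCirc (u s) (v s) i j = (∑ s, u s) * perp i j + (∑ s, v s) / 3 := by
    simp only [symmCirc, Finset.sum_add_distrib, Finset.sum_mul, Finset.sum_div]
  rw [sum_symmCirc_mul_vec, perpPart]
  simp only [Finset.sum_sub_distrib, Finset.sum_add_distrib, sum_symmCirc, h_sum]
  simp only [symmCirc, circChristoffel, perpPart]
  field_simp
  ring

theorem circChristoffel_mul_const {s t : ℝ} (x y : ℝ) (hs : s ≠ 0) (ht : t ≠ 0)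
    (u v : Fin 3 → ℝ) (k i j : Fin 3) :
    circChristoffel (x * s) (y * t) (fun m => u m * s) (fun m => v m * t) k i j
      = circChristoffel x y u v k i j
        + ((1 - s / t) / 6 * ((∑ m, u m) / y) * perp i j
          + (1 - t / s) / 6 * (perpPart v k / x)) := by
  simp only [circChristoffel, perpPart, ← Finset.sum_mul]
  field_simp
  ring

theorem sum_circChristoffel_upper (x y : ℝ) (u v : Fin 3 → ℝ) (s k : Fin 3) :
    ∑ i, circChristoffel x y u v i s k
      = 1 / 2 * ((v s + v k) / y - perp s k * ((∑ m, u m) / y) - (∑ m, v m) / (3 * y)) := by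
  simp only [circChristoffel, ← Finset.mul_sum, Finset.sum_sub_distrib, Finset.sum_add_distrib,
    ← Finset.sum_div, sum_perp, sum_perpPart, Finset.sum_const, Finset.card_univ, Fintype.card_fin,
    nsmul_eq_mul]
  push_cast
  ring

theorem sum_circChristoffel_lower (x y : ℝ) (u v : Fin 3 → ℝ) (i k : Fin 3) :
    ∑ s, circChristoffel x y u v i s k
      = 1 / 2 * ((∑ m, u m) / x * perp i k + v k / y - perpPart v i / x) := by
  simp only [circChristoffel, ← Finset.mul_sum, ← Finset.sum_mul, Finset.sum_sub_distrib,
    Finset.sum_add_distrib, ← Finset.sum_div, sum_perp, perp_comm i, Finset.sum_const,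
    Finset.card_univ, Fintype.card_fin, nsmul_eq_mul]
  push_cast
  ring

theorem sum_circChristoffel_mul_perp_add (x y : ℝ) (u v : Fin 3 → ℝ) {b : Fin 3 → ℝ}
    (hb : ∑ s, b s = 0) (a : ℝ) (j k : Fin 3) :
    ∑ i, ∑ s, circChristoffel x y u v i s k * (a * perp i j + b s)
      = symmCirc (a * (∑ m, u m) / (2 * x)) (3 * (∑ s, b s * v s) / (2 * y)) j k
        - a * perpPart v j / (2 * x) - b k * (∑ m, u m) / (2 * y) := by
  have h_split : ∑ i, ∑ s, circChristoffel x y u v i s k * (a * perp i j + b s)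
      = a * ∑ i, perp i j * ∑ s, circChristoffel x y u v i s k
        + ∑ s, b s * ∑ i, circChristoffel x y u v i s k := by
    simp only [Fin.sum_univ_three]
    ring
  have h_lower : ∑ i, perp i j * ∑ s, circChristoffel x y u v i s k
      = 1 / 2 * ((∑ m, u m) / x * perp j k - perpPart v j / x) := by
    rw [sum_perp_mul, perpPart]
    simp only [sum_circChristoffel_lower, ← Finset.mul_sum, Finset.sum_sub_distrib,
      Finset.sum_add_distrib, ← Finset.sum_div, sum_perp, sum_perpPart, Finset.sum_const,
      Finset.card_univ, Fintype.card_fin, nsmul_eq_mul]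
    push_cast
    ring
  have h_upper : ∑ s, b s * ∑ i, circChristoffel x y u v i s k
      = 1 / 2 * ((∑ s, b s * v s) / y - b k * ((∑ m, u m) / y)) := by
    have h_perp : ∑ s, perp s k * b s = b k := by rw [sum_perp_mul, perpPart_eq_self hb]
    calc ∑ s, b s * ∑ i, circChristoffel x y u v i s k
        = 1 / 2 * ((∑ s, b s * v s) / y - (∑ s, perp s k * b s) * ((∑ m, u m) / y)
          + (∑ s, b s) * (v k / y - (∑ m, v m) / (3 * y))) := by
          simp only [sum_circChristoffel_upper]
          simp only [Fin.sum_univ_three]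
          ring
      _ = _ := by rw [h_perp, hb]; ring
  rw [h_split, h_lower, h_upper, symmCirc]
  ring

theorem sum_circChristoffel_mul_perp_add_symm {s t : ℝ} (hs : s ≠ 0) (ht : t ≠ 0) (x y : ℝ)
    (u v : Fin 3 → ℝ) {a : ℝ} {b : Fin 3 → ℝ}
    (ha : a = (1 - s / t) / 6 * ((∑ m, u m) / y))
    (hb : ∀ k, b k = (1 - t / s) / 6 * (perpPart v k / x)) (j k : Fin 3) :
    ∑ i, ∑ m, circChristoffel x y u v i m k * (a * perp i j + b m)
        + ∑ i, ∑ m, circChristoffel x y u v i m j * (a * perp i k + b m)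
      = symmCirc (a * (∑ m, u m) / x) (3 * (∑ m, b m * v m) / y) j k - 3 * a * (b j + b k) := by
  have hb_sum : ∑ m, b m = 0 := by
    simp only [hb, ← Finset.mul_sum, ← Finset.sum_div, sum_perpPart, zero_div, mul_zero]
  have h_cancel : ∀ m, a * perpPart v m / (2 * x) + b m * (∑ m, u m) / (2 * y) = 3 * a * b m := by
    intro m
    -- For `r = s / t` this is `(1 - r⁻¹) + (1 - r) = (1 - r) * (1 - r⁻¹)`.
    have h_ratio : (1 - t / s) + (1 - s / t) = (1 - s / t) * (1 - t / s) := by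
      field_simp
      ring
    rw [ha, hb]
    linear_combination perpPart v m * (∑ m, u m) / (12 * x * y) * h_ratio
  rw [sum_circChristoffel_mul_perp_add x y u v hb_sum,
    sum_circChristoffel_mul_perp_add x y u v hb_sum]
  simp only [symmCirc, perp_comm k j]
  linear_combination -h_cancel j - h_cancel k

end CirculantChristoffel

/-- On `U` the metric `h` is circulant with eigenvalue `y` on `(1, 1, 1)` and eigenvalue `x` on the
orthogonal complement, and `hinv` is its pointwise inverse. -/
structure IsCircMetricOn (U : Set Pt) (x y : Pt → ℝ) (h hinv : Fin 3 → Fin 3 → Pt → ℝ) : Prop where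
  eq_symmCirc : ∀ q ∈ U, ∀ i j, h i j q = symmCirc (x q) (y q) i j
  mul_inv : ∀ q ∈ U, ∀ i j, ∑ s, h i s q * hinv s j q = if i = j then (1 : ℝ) else 0

namespace IsCircMetricOn

variable {U : Set Pt} {x y : Pt → ℝ} {h hinv h' hinv' : Fin 3 → Fin 3 → Pt → ℝ} {p : Pt}

theorem symmCirc_mul_inv (hh : IsCircMetricOn U x y h hinv) (hp : p ∈ U) :
    symmCirc (x p) (y p) * (Matrix.of fun i j => hinv i j p) = 1 := by
  ext i j
  simp [Matrix.mul_apply, ← hh.eq_symmCirc p hp, hh.mul_inv p hp, Matrix.one_apply]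

theorem sq_mul_ne_zero (hh : IsCircMetricOn U x y h hinv) (hp : p ∈ U) : x p ^ 2 * y p ≠ 0 := by
  rw [← det_symmCirc]
  exact (Matrix.isUnit_det_of_right_inverse (hh.symmCirc_mul_inv hp)).ne_zero

theorem fst_ne_zero (hh : IsCircMetricOn U x y h hinv) (hp : p ∈ U) : x p ≠ 0 :=
  fun h0 => hh.sq_mul_ne_zero hp (by simp [h0])

theorem snd_ne_zero (hh : IsCircMetricOn U x y h hinv) (hp : p ∈ U) : y p ≠ 0 :=
  right_ne_zero_of_mul (hh.sq_mul_ne_zero hp)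

theorem inv_eq_symmCirc (hh : IsCircMetricOn U x y h hinv) (hp : p ∈ U) (i j : Fin 3) :
    hinv i j p = symmCirc (x p)⁻¹ (y p)⁻¹ i j := by
  have h_inv : symmCirc (x p) (y p) * symmCirc (x p)⁻¹ (y p)⁻¹ = 1 := by
    rw [symmCirc_mul, mul_inv_cancel₀ (hh.fst_ne_zero hp), mul_inv_cancel₀ (hh.snd_ne_zero hp),
      symmCirc_one_one]
  have h_eq := (Matrix.inv_eq_right_inv (hh.symmCirc_mul_inv hp)).symm.trans
    (Matrix.inv_eq_right_inv h_inv)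
  exact congrFun (congrFun h_eq i) j

theorem Gamma_eq (hh : IsCircMetricOn U x y h hinv) (hU : IsOpen U) (hp : p ∈ U)
    (hx : DifferentiableOn ℝ x U) (hy : DifferentiableOn ℝ y U) (k i j : Fin 3) :
    Gamma h hinv k i j p
      = circChristoffel (x p) (y p) (fun m => pd m x p) (fun m => pd m y p) k i j := by
  have hxp := hx.differentiableAt (hU.mem_nhds hp)
  have hyp := hy.differentiableAt (hU.mem_nhds hp)
  have hpd : ∀ m i j, pd m (h i j) p = symmCirc (pd m x p) (pd m y p) i j := fun m i j => by
    rw [pd_congr (eventually_of_mem (hU.mem_nhds hp) fun q hq => hh.eq_symmCirc q hq i j)]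
    simp only [symmCirc, div_eq_mul_inv]
    rw [pd_add (hxp.mul_const _) (hyp.mul_const _), pd_mul_const hxp, pd_mul_const hyp]
  simp only [Gamma, hpd, hh.inv_eq_symmCirc hp]
  exact sum_symmCirc_inv_mul_eq_circChristoffel (hh.fst_ne_zero hp) (hh.snd_ne_zero hp)
    (fun m => pd m x p) (fun m => pd m y p) k i j

theorem differentiableAt_Gamma (hh : IsCircMetricOn U x y h hinv) (hU : IsOpen U)
    (hx : ContDiffOn ℝ 2 x U) (hy : ContDiffOn ℝ 2 y U) (hp : p ∈ U) (k i j : Fin 3) :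
    DifferentiableAt ℝ (Gamma h hinv k i j) p := by
  have hpdx := differentiableAt_pd (hx.contDiffAt (hU.mem_nhds hp))
  have hpdy := differentiableAt_pd (hy.contDiffAt (hU.mem_nhds hp))
  have hx0 := hh.fst_ne_zero hp
  have hy0 := hh.snd_ne_zero hp
  have hx1 := hx.differentiableOn two_ne_zero
  have hy1 := hy.differentiableOn two_ne_zero
  have hxp := hx1.differentiableAt (hU.mem_nhds hp)
  have hyp := hy1.differentiableAt (hU.mem_nhds hp)
  refine DifferentiableAt.congr_of_eventuallyEq ?_ (eventually_of_mem (hU.mem_nhds hp)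
    fun q hq => hh.Gamma_eq hU hq hx1 hy1 k i j)
  unfold circChristoffel perpPart
  fun_prop (disch := simp [hy0])

theorem Gamma_eq_add_perp {s t : ℝ} (hh : IsCircMetricOn U x y h hinv)
    (hh' : IsCircMetricOn U (fun q => x q * s) (fun q => y q * t) h' hinv') (hU : IsOpen U)
    (hx : DifferentiableOn ℝ x U) (hy : DifferentiableOn ℝ y U) (hp : p ∈ U) (k i j : Fin 3) :
    Gamma h' hinv' k i j p = Gamma h hinv k i j p
      + ((1 - s / t) / 6 * ((∑ m, pd m x p) / y p) * perp i j
        + (1 - t / s) / 6 * (perpPart (fun m => pd m y p) k / x p)) := by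
  have hs : s ≠ 0 := right_ne_zero_of_mul (hh'.fst_ne_zero hp)
  have ht : t ≠ 0 := right_ne_zero_of_mul (hh'.snd_ne_zero hp)
  rw [hh.Gamma_eq hU hp hx hy, hh'.Gamma_eq hU hp (hx.mul_const s) (hy.mul_const t)]
  simp only [pd_mul_const (hx.differentiableAt (hU.mem_nhds hp)),
    pd_mul_const (hy.differentiableAt (hU.mem_nhds hp))]
  exact circChristoffel_mul_const _ _ hs ht ..

theorem exists_Ricci_eq_add_symmCirc {s t : ℝ} (hh : IsCircMetricOn U x y h hinv)
    (hh' : IsCircMetricOn U (fun q => x q * s) (fun q => y q * t) h' hinv') (hU : IsOpen U)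
    (hx : ContDiffOn ℝ 2 x U) (hy : ContDiffOn ℝ 2 y U) (hp : p ∈ U) :
    ∃ ξ η : ℝ, ∀ j k, Ricci h' hinv' j k p = Ricci h hinv j k p + symmCirc ξ η j k := by
  have hx1 := hx.differentiableOn two_ne_zero
  have hy1 := hy.differentiableOn two_ne_zero
  have hxp := hx1.differentiableAt (hU.mem_nhds hp)
  have hyp := hy1.differentiableAt (hU.mem_nhds hp)
  have hpdx := differentiableAt_pd (hx.contDiffAt (hU.mem_nhds hp))
  have hpdy := differentiableAt_pd (hy.contDiffAt (hU.mem_nhds hp))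
  have hx0 := hh.fst_ne_zero hp
  have hy0 := hh.snd_ne_zero hp
  have hs : s ≠ 0 := right_ne_zero_of_mul (hh'.fst_ne_zero hp)
  have ht : t ≠ 0 := right_ne_zero_of_mul (hh'.snd_ne_zero hp)
  let α : Pt → ℝ := fun q => (1 - s / t) / 6 * ((∑ m, pd m x q) / y q)
  let β : Fin 3 → Pt → ℝ := fun k q => (1 - t / s) / 6 * (perpPart (fun m => pd m y q) k / x q)
  have hα : DifferentiableAt ℝ α p := by
    unfold α
    fun_prop (disch := assumption)
  have hβ : ∀ k, DifferentiableAt ℝ (β k) p := fun k => by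
    unfold β perpPart
    fun_prop (disch := assumption)
  have hβ_sum : ∀ q, ∑ k, β k q = 0 := fun q => by
    simp only [β, ← Finset.mul_sum, ← Finset.sum_div, sum_perpPart, zero_div, mul_zero]
  have hΓ : ∀ᶠ q in 𝓝 p, ∀ k i j,
      Gamma h' hinv' k i j q = Gamma h hinv k i j q + (α q * perp i j + β k q) :=
    eventually_of_mem (hU.mem_nhds hp) fun q hq => hh.Gamma_eq_add_perp hh' hU hx1 hy1 hq
  obtain ⟨ξ, η, h_diff⟩ := exists_connRicci_add_perp (hh.differentiableAt_Gamma hU hx hy hp) hα hβ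
    (.of_forall hβ_sum) hΓ
  refine ⟨ξ - α p * (∑ m, pd m x p) / x p, η - 3 * (∑ m, β m p * pd m y p) / y p, fun j k => ?_⟩
  have h_contract := sum_circChristoffel_mul_perp_add_symm hs ht (x p) (y p)
    (fun m => pd m x p) (fun m => pd m y p) (a := α p) (b := fun m => β m p) rfl (fun _ => rfl) j k
  rw [Ricci_eq_connRicci (hh.mul_inv p hp), Ricci_eq_connRicci (hh'.mul_inv p hp), h_diff]
  simp only [hh.Gamma_eq hU hp hx1 hy1, circChristoffel_comm _ _ _ _ _ j]
  rw [h_contract]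
  simp only [symmCirc]
  ring

end IsCircMetricOn

theorem isCircMetricOn_gm {U : Set Pt} {A B : Pt → ℝ} {ginv : Fin 3 → Fin 3 → Pt → ℝ}
    (hginv : ∀ p ∈ U, ∀ i j, ∑ s, gm A B i s p * ginv s j p = if i = j then (1 : ℝ) else 0) :
    IsCircMetricOn U (fun q => A q - B q) (fun q => A q + 2 * B q) (gm A B) ginv where
  eq_symmCirc q _ i j := by
    simp only [gm, symmCirc, perp]
    split_ifs <;> ring
  mul_inv := hginv

theorem isCircMetricOn_gt {U : Set Pt} {A B : Pt → ℝ} {gtinv : Fin 3 → Fin 3 → Pt → ℝ}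
    (hgtinv : ∀ p ∈ U, ∀ i j, ∑ s, gt A B i s p * gtinv s j p = if i = j then (1 : ℝ) else 0) :
    IsCircMetricOn U (fun q => (A q - B q) * (-1)) (fun q => (A q + 2 * B q) * 2) (gt A B)
      gtinv where
  eq_symmCirc q _ i j := by
    fin_cases i <;> fin_cases j <;>
      simp [gt, gm, Qmat, symmCirc, perp, Fin.sum_univ_three] <;> ring
  mul_inv := hgtinv

theorem Ricci_eq_of_eq_symmCirc {U : Set Pt} {A B : Pt → ℝ} {ginv gtinv : Fin 3 → Fin 3 → Pt → ℝ}
    (hginv : ∀ p ∈ U, ∀ i j, ∑ s, gm A B i s p * ginv s j p = if i = j then (1 : ℝ) else 0)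
    (hgtinv : ∀ p ∈ U, ∀ i j, ∑ s, gt A B i s p * gtinv s j p = if i = j then (1 : ℝ) else 0)
    {p : Pt} (hp : p ∈ U) {ξ η : ℝ} (hRic : ∀ i j, Ricci (gm A B) ginv i j p = symmCirc ξ η i j)
    (i j : Fin 3) :
    Ricci (gm A B) ginv i j p =
      (scal (gm A B) ginv ginv p / 3) * gm A B i j p
      + ((2 * scal (gm A B) ginv gtinv p + scal (gm A B) ginv ginv p) / 6) * gt A B i j p := by
  have hg := isCircMetricOn_gm hginv
  have hgt := isCircMetricOn_gt hgtinv
  have ha := hg.fst_ne_zero hp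
  have hc := hg.snd_ne_zero hp
  simp only [scal, hRic, hg.inv_eq_symmCirc hp, hgt.inv_eq_symmCirc hp,
    sum_symmCirc_mul_symmCirc, hg.eq_symmCirc p hp, hgt.eq_symmCirc p hp]
  simp only [symmCirc]
  field_simp
  ring

theorem almost_einstein_of_flat_tilde_general
    (U : Set Pt) (hU : IsOpen U) (A B : Pt → ℝ)
    (hA : ContDiffOn ℝ 2 A U) (hB : ContDiffOn ℝ 2 B U)
    (ginv gtinv : Fin 3 → Fin 3 → Pt → ℝ)
    (hginv : ∀ p ∈ U, ∀ i j, (∑ s, gm A B i s p * ginv s j p) = if i = j then (1 : ℝ) else 0)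
    (hgtinv : ∀ p ∈ U, ∀ i j, (∑ s, gt A B i s p * gtinv s j p) = if i = j then (1 : ℝ) else 0)
    (p : Pt) (hp : p ∈ U)
    (hRic : ∃ β γ : ℝ, ∀ i j,
      Ricci (gt A B) gtinv i j p = β * gm A B i j p + γ * gt A B i j p) (i j : Fin 3) :
    Ricci (gm A B) ginv i j p =
      (scal (gm A B) ginv ginv p / 3) * gm A B i j p
      + ((2 * scal (gm A B) ginv gtinv p + scal (gm A B) ginv ginv p) / 6) * gt A B i j p := by
  have hg := isCircMetricOn_gm hginv
  have hgt := isCircMetricOn_gt hgtinv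
  obtain ⟨ξ, η, h_diff⟩ := hg.exists_Ricci_eq_add_symmCirc hgt hU (hA.sub hB)
    (hA.add (contDiffOn_const.mul hB)) hp
  obtain ⟨β, γ, h_comb⟩ := hRic
  refine Ricci_eq_of_eq_symmCirc hginv hgtinv hp (ξ := (A p - B p) * (β - γ) - ξ)
    (η := (A p + 2 * B p) * (β + 2 * γ) - η) (fun i j => ?_) i j
  have h_ij := h_diff i j
  rw [h_comb, hg.eq_symmCirc p hp, hgt.eq_symmCirc p hp] at h_ij
  simp only [symmCirc] at h_ij ⊢
  linear_combination -h_ij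

theorem Ricci_eq_zero_of_Riem_eq_zero {h hinv : Fin 3 → Fin 3 → Pt → ℝ} {p : Pt}
    (hR : ∀ l i j k, Riem h hinv l i j k p = 0) (j k : Fin 3) : Ricci h hinv j k p = 0 := by
  simp [Ricci, RiemLow, hR]

/-- if the curvature of `g̃` vanishes on `U`, then
`ρ_{ij} = (τ/3) g_{ij} + ((2τ* + τ)/6) g̃_{ij}`; in particular `(U, g, Q)` is
almost Einstein: `ρ` is a functional linear combination of `g` and `g̃`. -/
theorem almost_einstein_of_flat_tilde
    (U : Set Pt) (hU : IsOpen U) (A B : Pt → ℝ)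
    (hA : ContDiffOn ℝ (⊤ : ℕ∞) A U) (hB : ContDiffOn ℝ (⊤ : ℕ∞) B U)
    (hpos : ∀ p ∈ U, 0 < B p ∧ B p < A p)
    (ginv gtinv : Fin 3 → Fin 3 → Pt → ℝ)
    (hginv : ∀ p ∈ U, ∀ i j, (∑ s, gm A B i s p * ginv s j p) = if i = j then (1:ℝ) else 0)
    (hgtinv : ∀ p ∈ U, ∀ i j, (∑ s, gt A B i s p * gtinv s j p) = if i = j then (1:ℝ) else 0)
    (hflat : ∀ p ∈ U, ∀ l i j k, Riem (gt A B) gtinv l i j k p = 0) :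
    (∀ p ∈ U, ∀ i j,
      Ricci (gm A B) ginv i j p =
        (scal (gm A B) ginv ginv p / 3) * gm A B i j p
        + ((2 * scal (gm A B) ginv gtinv p + scal (gm A B) ginv ginv p) / 6) * gt A B i j p)
    ∧ ∃ β γ : Pt → ℝ, ∀ p ∈ U, ∀ i j,
        Ricci (gm A B) ginv i j p = β p * gm A B i j p + γ p * gt A B i j p := by
  have h_main := fun p hp => almost_einstein_of_flat_tilde_general U hU A B
    (contDiffOn_infty.mp hA 2) (contDiffOn_infty.mp hB 2) ginv gtinv
    hginv hgtinv p hp ⟨0, 0, fun i j => by simp [Ricci_eq_zero_of_Riem_eq_zero (hflat p hp)]⟩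
  exact ⟨h_main, _, _, h_main⟩
end
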